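/- There exists a constant K₄ > 0 depending only on m and n such that for every v with 1 ≤ v ≤ m and all A', A'' ∈ ℒ^{mn}, ‖∇D_v(A') − ∇D_v(A'')‖_∞ ≤ K₄ ‖M_{v-1}(A') − M_{v-1}(A'')‖_∞. -/

import Mathlib

/-!
Common setup: the field `ℒ = 𝔽((X⁻¹))` of formal Laurent series with coefficients
in a finite field `𝔽` of `k` elements.  We realize `ℒ` as `LaurentSeries 𝔽`
(Hahn series over `ℤ`) in the variable `T = X⁻¹`, so that `X` corresponds to `T⁻¹`
and the polynomial ring `𝔽[X]` corresponds to series supported on nonpositive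
exponents.  The absolute value of `x = Σ_{i ≤ N} a_i X^i` (with `a_N ≠ 0`) is
`k^N`, i.e. `k^(-order x)` in terms of the `T`-adic order.
-/

open scoped Classical ENNReal NNReal
open MeasureTheory

noncomputable section

namespace FSBad

/-- The field `ℒ = 𝔽((X⁻¹))`. -/
abbrev L (𝔽 : Type) [Field 𝔽] : Type := LaurentSeries 𝔽

variable {𝔽 : Type} [Field 𝔽] [Fintype 𝔽]

/-- The absolute value `‖·‖` on `ℒ`: `‖x‖ = k^(deg_X x)`, `‖0‖ = 0`. -/
def lnorm (x : L 𝔽) : ℝ := if x = 0 then 0 else (Fintype.card 𝔽 : ℝ) ^ (-x.order)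

/-- Membership in the polynomial ring `𝔽[X] ⊆ ℒ` (polynomials in `X = T⁻¹`). -/
def IsPoly (x : L 𝔽) : Prop := ∀ i : ℤ, 0 < i → x.coeff i = 0

/-- The height (sup-norm) `‖·‖_∞` on `ℒ^ι`. -/
def vnorm {ι : Type*} (x : ι → L 𝔽) : ℝ := ⨆ i, lnorm (x i)

/-- The closed ball in `ℒ^ι` with centre `c` and radius `ρ`. -/
def vball {ι : Type*} (c : ι → L 𝔽) (ρ : ℝ) : Set (ι → L 𝔽) :=
  {x | vnorm (fun i => x i - c i) ≤ ρ}

/-- `m × n` matrices over `ℒ`, identified with `ℒ^(mn)`. -/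
abbrev Mat (𝔽 : Type) [Field 𝔽] (m n : ℕ) : Type := Matrix (Fin m) (Fin n) (L 𝔽)

/-- The height of a matrix, i.e. the sup-norm on `ℒ^(mn)`. -/
def mnorm {m n : ℕ} (A : Mat 𝔽 m n) : ℝ := ⨆ p : Fin m × Fin n, lnorm (A p.1 p.2)

/-- The closed ball in `ℒ^(mn)` with centre `c` and radius `ρ`. -/
def mball {m n : ℕ} (c : Mat 𝔽 m n) (ρ : ℝ) : Set (Mat 𝔽 m n) :=
  {A | mnorm (A - c) ≤ ρ}

/-- The distance `⟨x⟩` from `x ∈ ℒ^h` to the polynomial lattice `𝔽[X]^h`. -/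
def latDist {h : ℕ} (x : Fin h → L 𝔽) : ℝ :=
  sInf {r : ℝ | ∃ p : Fin h → L 𝔽, (∀ i, IsPoly (p i)) ∧ r = vnorm (fun i => x i - p i)}

/-- The set `𝔅(m,n)` of badly approximable systems of `m` linear forms in `n`
variables over `ℒ`. -/
def Bad (𝔽 : Type) [Field 𝔽] [Fintype 𝔽] (m n : ℕ) : Set (Mat 𝔽 m n) :=
  {A | ∃ K : ℝ, 0 < K ∧ ∀ q : Fin m → L 𝔽, (∀ i, IsPoly (q i)) → q ≠ 0 →
    latDist (Matrix.vecMul q A) ^ n > K / vnorm q ^ m}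

/-- The Hausdorff `s`-measure of `E ⊆ ℒ^(mn)`, defined through countable covers by
balls of radii `< δ`, letting `δ → 0` (the infimum over `δ`-covers is nonincreasing
in `δ`, so the limit is the supremum over `δ > 0`). -/
def hMeasure {m n : ℕ} (s : ℝ) (E : Set (Mat 𝔽 m n)) : ℝ≥0∞ :=
  ⨆ (δ : ℝ) (_ : 0 < δ),
    ⨅ (c : ℕ → Mat 𝔽 m n) (ρ : ℕ → ℝ) (_ : ∀ i, 0 < ρ i ∧ ρ i < δ)
      (_ : E ⊆ ⋃ i, mball (c i) (ρ i)), ∑' i, ENNReal.ofReal (ρ i ^ s)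

/-- The Hausdorff dimension of `E ⊆ ℒ^(mn)`. -/
def hdim {m n : ℕ} (E : Set (Mat 𝔽 m n)) : ℝ :=
  sInf {s : ℝ | 0 ≤ s ∧ hMeasure s E = 0}

/-! ### Schmidt `(α,β)`-games on `ℒ^(mn)` -/

/-- A formal ball: an element of `Ω = ℒ^(mn) × ℝ`. -/
structure FBall (𝔽 : Type) [Field 𝔽] (m n : ℕ) where
  /-- centre -/
  c : Mat 𝔽 m n
  /-- radius -/
  r : ℝ

/-- Formal inclusion of formal balls: `(c₁,ρ₁) ⊆ (c₂,ρ₂)` iff `ρ₁ + ‖c₁ - c₂‖_∞ ≤ ρ₂`. -/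
def FBall.ssub {m n : ℕ} (B₁ B₂ : FBall 𝔽 m n) : Prop :=
  B₁.r + mnorm (B₁.c - B₂.c) ≤ B₂.r

/-- The subset of `ℒ^(mn)` determined by a formal ball. -/
def FBall.toSet {m n : ℕ} (B : FBall 𝔽 m n) : Set (Mat 𝔽 m n) := mball B.c B.r

/-- A strategy for White: given the balls `B₁, …, B_{i+1}` chosen by Black so far,
produce White's next ball. -/
abbrev Strategy (𝔽 : Type) [Field 𝔽] (m n : ℕ) : Type :=
  (i : ℕ) → (Fin (i + 1) → FBall 𝔽 m n) → FBall 𝔽 m n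

/-- White's move at stage `i` when following strategy `str` against Black's balls `B`. -/
def wMove {m n : ℕ} (str : Strategy 𝔽 m n) (B : ℕ → FBall 𝔽 m n) (i : ℕ) : FBall 𝔽 m n :=
  str i fun j => B j.1

/-- Black's move `B_{j+2}` is legal (for parameter `β`): it is a formal subset of
White's ball `W_{j+1}` and has radius `β · ρ(W_{j+1})`. -/
def BlackOk {m n : ℕ} (β : ℝ) (str : Strategy 𝔽 m n) (B : ℕ → FBall 𝔽 m n) (j : ℕ) : Prop :=
  (B (j + 1)).ssub (wMove str B j) ∧ (B (j + 1)).r = β * (wMove str B j).r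

/-- White's move `W_{i+1}` is legal (for parameter `α`): it is a formal subset of
Black's ball `B_{i+1}` and has radius `α · ρ(B_{i+1})`. -/
def WhiteOk {m n : ℕ} (α : ℝ) (str : Strategy 𝔽 m n) (B : ℕ → FBall 𝔽 m n) (i : ℕ) : Prop :=
  (wMove str B i).ssub (B i) ∧ (wMove str B i).r = α * (B i).r

/-- `str` is a winning strategy for White in the `(α,β;S)`-game: against any
sequence of Black balls, White's moves are legal as long as Black has played
legally so far, and if the whole play is legal then the intersection of the
chosen balls is contained in `S`. -/
def WinningStrategy {m n : ℕ} (α β : ℝ) (S : Set (Mat 𝔽 m n)) (str : Strategy 𝔽 m n) : Prop :=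
  ∀ B : ℕ → FBall 𝔽 m n, 0 ≤ (B 0).r →
    (∀ i, (∀ j < i, BlackOk β str B j) → WhiteOk α str B i) ∧
    ((∀ j, BlackOk β str B j) → (⋂ i, (B i).toSet) ⊆ S)

/-- `S` is `(α,β)`-winning. -/
def IsWinningAB {m n : ℕ} (α β : ℝ) (S : Set (Mat 𝔽 m n)) : Prop :=
  ∃ str : Strategy 𝔽 m n, WinningStrategy α β S str

/-- `S` is `α`-winning. -/
def IsWinningA {m n : ℕ} (α : ℝ) (S : Set (Mat 𝔽 m n)) : Prop :=
  ∀ β : ℝ, 0 < β → β < 1 → IsWinningAB α β S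

/-- The winning dimension of `S` (a supremum of a set of reals, which is `0` by
convention when the set is empty). -/
def windim {m n : ℕ} (S : Set (Mat 𝔽 m n)) : ℝ :=
  sSup {α : ℝ | 0 < α ∧ α < 1 ∧ IsWinningA α S}

/-! ### The matrices `Ā`, `Ā^*` and the quantities `M_v`, `D_v`, `∇D_v` -/

/-- `Ā = [[A, I_m], [I_n, 0]]`. Rows are indexed by `Fin m ⊕ Fin n`
(coordinates `q_1, …, q_{m+n}`), columns by `Fin n ⊕ Fin m`. -/
def Abar {m n : ℕ} (A : Mat 𝔽 m n) : Matrix (Fin m ⊕ Fin n) (Fin n ⊕ Fin m) (L 𝔽) :=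
  Matrix.fromBlocks A 1 1 0

/-- `Ā^* = [[Aᵀ, I_n], [I_m, 0]]`. Rows are indexed by `Fin n ⊕ Fin m`,
columns by `Fin m ⊕ Fin n`. -/
def AbarStar {m n : ℕ} (A : Mat 𝔽 m n) : Matrix (Fin n ⊕ Fin m) (Fin m ⊕ Fin n) (L 𝔽) :=
  Matrix.fromBlocks A.transpose 1 1 0

/-- The standard bilinear form `x·y = Σ_i x_i y_i` on `ℒ^ι`. -/
def dotL {ι : Type*} [Fintype ι] (x y : ι → L 𝔽) : L 𝔽 := ∑ i, x i * y i

/-- Strictly increasing `v`-tuples `1 ≤ i_1 < ⋯ < i_v ≤ m`. -/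
def IncTuple (v m : ℕ) : Type := {f : Fin v → Fin m // StrictMono f}

/-- The vector `M_v(A) ∈ ℒ^(C(m,v)²)` of the determinants
`det (y_{i_r} · C_{j_s}(Ā^*))_{1 ≤ r,s ≤ v}` over all strictly increasing index
tuples.  (For `v = 0` every coordinate is an empty determinant, i.e. `1`.) -/
def MvVec {m n : ℕ} (y : Fin m → (Fin n ⊕ Fin m → L 𝔽)) (v : ℕ) (A : Mat 𝔽 m n) :
    IncTuple v m × IncTuple v m → L 𝔽 := fun p =>
  Matrix.det (Matrix.of fun r s : Fin v =>
    dotL (y (p.1.1 r)) fun t => AbarStar A t (Sum.inl (p.2.1 s)))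

/-- `‖M_v(A)‖_∞`. -/
def MvNorm {m n : ℕ} (y : Fin m → (Fin n ⊕ Fin m → L 𝔽)) (v : ℕ) (A : Mat 𝔽 m n) : ℝ :=
  vnorm (MvVec y v A)

/-- `M_v(K) = max_{A ∈ K} ‖M_v(A)‖_∞` for `K ⊆ ℒ^(mn)`. -/
def MvSet {m n : ℕ} (y : Fin m → (Fin n ⊕ Fin m → L 𝔽)) (v : ℕ) (K : Set (Mat 𝔽 m n)) : ℝ :=
  sSup {r : ℝ | ∃ A ∈ K, r = MvNorm y v A}

/-- `D_v(A) = det (y_h · C_l(Ā^*))_{1 ≤ h,l ≤ v}`. -/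
def Dv {m n : ℕ} (y : Fin m → (Fin n ⊕ Fin m → L 𝔽)) (v : ℕ) (hv : v ≤ m)
    (A : Mat 𝔽 m n) : L 𝔽 :=
  Matrix.det (Matrix.of fun h l : Fin v =>
    dotL (y (Fin.castLE hv h)) fun t => AbarStar A t (Sum.inl (Fin.castLE hv l)))

/-- The discrete gradient `∇D_v(A) ∈ ℒ^(mn)`, with coordinates
`D_v(A + E_{ij}) - D_v(A)`. -/
def gradDv {m n : ℕ} (y : Fin m → (Fin n ⊕ Fin m → L 𝔽)) (v : ℕ) (hv : v ≤ m)
    (A : Mat 𝔽 m n) : Fin m × Fin n → L 𝔽 := fun p =>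
  Dv y v hv (A + Matrix.single p.1 p.2 1) - Dv y v hv A

/-- `y_1, …, y_m ∈ ℒ^(m+n)` form an orthonormal system: `y_h · y_{h'} = δ_{h h'}`
and `‖t_1 y_1 + ⋯ + t_m y_m‖_∞ = max_h ‖t_h‖`. -/
def OrthoSystem {m n : ℕ} (y : Fin m → (Fin n ⊕ Fin m → L 𝔽)) : Prop :=
  (∀ h h', dotL (y h) (y h') = if h = h' then 1 else 0) ∧
  (∀ t : Fin m → L 𝔽, vnorm (fun r => ∑ h, t h * y h r) = ⨆ h, lnorm (t h))

/-! ### Distance functions, parallelepipeds and successive minima -/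

/-- The `j`-th successive minimum of a distance function `F` on `ℒ^N`: the infimum
of all `λ > 0` such that `{F < λ}` contains `j` linearly independent points of
`𝔽[X]^N`. -/
def succMin {N : ℕ} (F : (Fin N → L 𝔽) → ℝ) (j : ℕ) : ℝ :=
  sInf {lam : ℝ | 0 < lam ∧ ∃ v : Fin j → (Fin N → L 𝔽),
    (∀ r, ∀ i, IsPoly (v r i)) ∧ LinearIndependent (L 𝔽) v ∧ ∀ r, F (v r) < lam}

/-- The distance function `F_A(x) = max_j c_j⁻¹ ‖Σ_i x_i a_{ij}‖`. -/
def FA {N : ℕ} (A : Matrix (Fin N) (Fin N) (L 𝔽)) (c : Fin N → ℝ)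
    (x : Fin N → L 𝔽) : ℝ :=
  ⨆ j, (c j)⁻¹ * lnorm (∑ i, x i * A i j)

/-- The parallelepiped `P_A(λ) = {x ∈ ℒ^N : F_A(x) < λ}`. -/
def PA {N : ℕ} (A : Matrix (Fin N) (Fin N) (L 𝔽)) (c : Fin N → ℝ) (lam : ℝ) :
    Set (Fin N → L 𝔽) := {x | FA A c x < lam}

/-- The polar distance function `F_A^*(y) = sup_{x ≠ 0} ‖x·y‖ / F_A(x)`. -/
def FAstar {N : ℕ} (A : Matrix (Fin N) (Fin N) (L 𝔽)) (c : Fin N → ℝ)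
    (y : Fin N → L 𝔽) : ℝ :=
  ⨆ x : {x : Fin N → L 𝔽 // x ≠ 0}, lnorm (dotL x.1 y) / FA A c x.1

/-! ### Haar measure, characterized by translation invariance and normalization -/

/-- The Borel σ-algebra on `ℒ^N`, generated by the balls. -/
def vecSigma (𝔽 : Type) [Field 𝔽] [Fintype 𝔽] (N : ℕ) : MeasurableSpace (Fin N → L 𝔽) :=
  MeasurableSpace.generateFrom {s | ∃ c ρ, (0 : ℝ) < ρ ∧ s = vball c ρ}

/-- `μ` is the Haar measure on `ℒ^N`: translation invariant and normalized so that
the unit ball `I^N` has measure `1` (these properties determine it uniquely). -/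
def IsHaarVec {N : ℕ} (μ : @Measure (Fin N → L 𝔽) (vecSigma 𝔽 N)) : Prop :=
  (∀ (v : Fin N → L 𝔽) (s : Set (Fin N → L 𝔽)), μ ((fun x => x + v) ⁻¹' s) = μ s) ∧
  μ {x | ∀ i, lnorm (x i) < 1} = 1

/-- The Borel σ-algebra on `ℒ^(mn)`, generated by the balls. -/
def matSigma (𝔽 : Type) [Field 𝔽] [Fintype 𝔽] (m n : ℕ) : MeasurableSpace (Mat 𝔽 m n) :=
  MeasurableSpace.generateFrom {s | ∃ c ρ, (0 : ℝ) < ρ ∧ s = mball c ρ}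

/-- `μ` is the Haar measure on `ℒ^(mn)`: translation invariant and normalized so
that the unit ball `I^(mn)` has measure `1`. -/
def IsHaarMat {m n : ℕ} (μ : @Measure (Mat 𝔽 m n) (matSigma 𝔽 m n)) : Prop :=
  (∀ (v : Mat 𝔽 m n) (s : Set (Mat 𝔽 m n)), μ ((fun x => x + v) ⁻¹' s) = μ s) ∧
  μ {A | ∀ i j, lnorm (A i j) < 1} = 1

/-! ### The constants of Section 3 -/

/-- `τ = m/(m+n)`. -/
def tau (m n : ℕ) : ℝ := m / (m + n)

/-- `δ = R^(-m(m+n)²)`. -/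
def del (R : ℝ) (m n : ℕ) : ℝ := R ^ (-((m : ℝ) * ((m : ℝ) + n) ^ 2))

/-- `δ* = R^(-n(m+n)²)`. -/
def delStar (R : ℝ) (m n : ℕ) : ℝ := R ^ (-((n : ℝ) * ((m : ℝ) + n) ^ 2))

/-!
Let `P(A)` be the matrix of pairings `y_h · C_l(Ā^*)`, so that `D_v` is the leading minor and the
coordinates of `M_v` are all the minors of order `v` of `P(A)`. Replacing `A` by `A + E_{ij}` adds
the vector `(y_h)_j` to the `i`-th column of `P(A)` and changes nothing else. Hence, by linearity of
the determinant in that column, the `(i, j)` coordinate of `∇D_v(A)` is `0` for `i > v`, and for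
`i ≤ v` it is `D_v` with the `i`-th column replaced by `(y_h)_j`. Laplace expansion along this
column writes it as a linear combination of coordinates of `M_{v-1}(A)` whose coefficients
`± (y_h)_j` do not depend on `A`, so the ultrametric inequality gives the Lipschitz bound with the
constant `max_{h,j} ‖(y_h)_j‖`, which is at most `1` for an orthonormal system.
-/

section Matrix

variable {R : Type*} {ι κ ι' κ' : Type*}

theorem updateCol_submatrix_of_injective [DecidableEq κ] [DecidableEq κ'] (M : Matrix ι κ R)
    (u : ι → R) (d : ι' → ι) {e : κ' → κ} (he : Function.Injective e) (k : κ') :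
    (M.updateCol (e k) u).submatrix d e = (M.submatrix d e).updateCol k (u ∘ d) := by
  ext r s
  simp only [Matrix.submatrix_apply, Matrix.updateCol_apply, he.eq_iff, Function.comp_apply]

theorem updateCol_submatrix_of_notMem_range [DecidableEq κ] (M : Matrix ι κ R) (u : ι → R)
    (d : ι' → ι) {e : κ' → κ} {i : κ} (hi : i ∉ Set.range e) :
    (M.updateCol i u).submatrix d e = M.submatrix d e := by
  ext r s
  exact Matrix.updateCol_ne fun h => hi ⟨s, h⟩

theorem det_updateCol_succ [CommRing R] {w : ℕ} (M : Matrix (Fin (w + 1)) (Fin (w + 1)) R)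
    (k : Fin (w + 1)) (u : Fin (w + 1) → R) :
    (M.updateCol k u).det =
      ∑ h : Fin (w + 1), (-1) ^ (h + k : ℕ) * u h * (M.submatrix h.succAbove k.succAbove).det := by
  simp only [Matrix.det_succ_column _ k, Matrix.updateCol_self,
    Matrix.submatrix_updateCol_succAbove]

theorem abv_det_updateCol_sub_le [CommRing R] {S : Type*} [CommRing S] [LinearOrder S]
    [IsStrictOrderedRing S] {f : AbsoluteValue R S} (hf : IsNonarchimedean f) {w : ℕ}
    (M N : Matrix (Fin (w + 1)) (Fin (w + 1)) R) (k : Fin (w + 1)) (u : Fin (w + 1) → R) {C B : S}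
    (hu : ∀ h, f (u h) ≤ C)
    (hMN : ∀ h : Fin (w + 1), f ((M.submatrix h.succAbove k.succAbove).det -
      (N.submatrix h.succAbove k.succAbove).det) ≤ B) :
    f ((M.updateCol k u).det - (N.updateCol k u).det) ≤ C * B := by
  have abv_neg_one_pow_mul (a : ℕ) (x : R) : f ((-1) ^ a * x) = f x := by
    rcases neg_one_pow_eq_or R a with h | h <;> simp [h]
  simp only [det_updateCol_succ, ← Finset.sum_sub_distrib, ← mul_sub]
  obtain ⟨h, -, hle⟩ := hf.finset_image_add_of_nonempty
    (fun h : Fin (w + 1) => (-1) ^ (h + k : ℕ) * u h *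
      ((M.submatrix h.succAbove k.succAbove).det - (N.submatrix h.succAbove k.succAbove).det))
    Finset.univ_nonempty
  refine hle.trans ?_
  rw [mul_assoc, abv_neg_one_pow_mul, map_mul]
  exact mul_le_mul (hu h) (hMN h) (f.nonneg _) ((f.nonneg _).trans (hu h))

end Matrix

section Norm

theorem lnorm_zero : lnorm (0 : L 𝔽) = 0 :=
  if_pos rfl

theorem lnorm_nonneg (x : L 𝔽) : 0 ≤ lnorm x := by
  unfold lnorm
  split_ifs <;> positivity

theorem lnorm_mul (x y : L 𝔽) : lnorm (x * y) = lnorm x * lnorm y := by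
  rcases eq_or_ne x 0 with rfl | hx
  · simp [lnorm_zero]
  rcases eq_or_ne y 0 with rfl | hy
  · simp [lnorm_zero]
  have card_ne_zero : (Fintype.card 𝔽 : ℝ) ≠ 0 := Nat.cast_ne_zero.mpr Fintype.card_ne_zero
  simp only [lnorm, hx, hy, mul_ne_zero hx hy, if_false, HahnSeries.order_mul hx hy, neg_add,
    zpow_add₀ card_ne_zero]

theorem isNonarchimedean_lnorm : IsNonarchimedean (lnorm : L 𝔽 → ℝ) := by
  intro x y
  rcases eq_or_ne x 0 with rfl | hx
  · rw [zero_add]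
    exact le_max_right _ _
  rcases eq_or_ne y 0 with rfl | hy
  · rw [add_zero]
    exact le_max_left _ _
  by_cases hxy : x + y = 0
  · simpa only [hxy, lnorm_zero] using le_max_of_le_left (lnorm_nonneg x)
  have one_le_card : (1 : ℝ) ≤ Fintype.card 𝔽 := by exact_mod_cast Fintype.card_pos
  simp only [lnorm, hx, hy, hxy, if_false, le_max_iff]
  exact (min_le_iff.mp (HahnSeries.min_order_le_order_add hxy)).imp
    (fun h => zpow_le_zpow_right₀ one_le_card (neg_le_neg h))
    (fun h => zpow_le_zpow_right₀ one_le_card (neg_le_neg h))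

/-- The absolute value `lnorm` on `ℒ`, bundled so that the library's results on absolute values
apply to it. -/
def lnormAbv : AbsoluteValue (L 𝔽) ℝ where
  toFun := lnorm
  map_mul' := lnorm_mul
  nonneg' := lnorm_nonneg
  eq_zero' x := by
    have card_ne_zero : (Fintype.card 𝔽 : ℝ) ≠ 0 := Nat.cast_ne_zero.mpr Fintype.card_ne_zero
    simp [lnorm, zpow_ne_zero _ card_ne_zero]
  add_le' _ _ := isNonarchimedean_lnorm.add_le lnorm_nonneg

variable {ι : Type*}

theorem lnorm_le_vnorm [Finite ι] (x : ι → L 𝔽) (i : ι) : lnorm (x i) ≤ vnorm x :=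
  le_ciSup (f := fun i => lnorm (x i)) (Set.finite_range _).bddAbove i

theorem vnorm_nonneg (x : ι → L 𝔽) : 0 ≤ vnorm x :=
  Real.iSup_nonneg fun i => lnorm_nonneg (x i)

theorem OrthoSystem.lnorm_le_one {m n : ℕ} {y : Fin m → (Fin n ⊕ Fin m → L 𝔽)}
    (hy : OrthoSystem y) (h : Fin m) (r : Fin n ⊕ Fin m) : lnorm (y h r) ≤ 1 := by
  let e : Fin m → L 𝔽 := Pi.single h 1
  have lnorm_e_le_one (i : Fin m) : lnorm (e i) ≤ 1 := by
    rcases eq_or_ne i h with rfl | hi <;> simp [e, lnorm, *]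
  calc lnorm (y h r) = lnorm (∑ i, e i * y i r) := by simp [e, Pi.single_apply]
    _ ≤ vnorm fun r => ∑ i, e i * y i r := lnorm_le_vnorm (fun r => ∑ i, e i * y i r) r
    _ = ⨆ i, lnorm (e i) := hy.2 e
    _ ≤ 1 := Real.iSup_le lnorm_e_le_one zero_le_one

end Norm

section Gradient

variable {K : Type} [Field K] {m n : ℕ}

/-- The matrix of pairings `y_h · C_l(Ā^*)` for `1 ≤ h, l ≤ m`, whose minors are the `D_v(A)` and
the coordinates of the `M_v(A)`. -/
def pairing (y : Fin m → (Fin n ⊕ Fin m → L K)) (A : Mat K m n) :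
    Matrix (Fin m) (Fin m) (L K) :=
  Matrix.of fun h l => dotL (y h) fun t => AbarStar A t (Sum.inl l)

theorem Dv_eq_det_submatrix_pairing (y : Fin m → (Fin n ⊕ Fin m → L K)) {v : ℕ} (hv : v ≤ m)
    (A : Mat K m n) :
    Dv y v hv A = ((pairing y A).submatrix (Fin.castLE hv) (Fin.castLE hv)).det :=
  rfl

theorem pairing_eq_add (y : Fin m → (Fin n ⊕ Fin m → L K)) (A : Mat K m n) :
    pairing y A = (Matrix.of y).toCols₁ * A.transpose + (Matrix.of y).toCols₂ := by
  ext h l : 2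
  simp [pairing, dotL, AbarStar, Matrix.mul_apply, Matrix.one_apply]

theorem pairing_add_single (y : Fin m → (Fin n ⊕ Fin m → L K)) (A : Mat K m n) (i : Fin m)
    (j : Fin n) :
    pairing y (A + Matrix.single i j 1) =
      (pairing y A).updateCol i ((pairing y A).col i + (Matrix.of y).toCols₁.col j) := by
  rw [pairing_eq_add, Matrix.transpose_add, Matrix.transpose_single, Matrix.mul_add,
    Matrix.mul_single_eq_updateCol_zero, MulOpposite.op_one, one_smul, add_right_comm,
    ← pairing_eq_add]
  ext h l : 2
  rcases eq_or_ne l i with rfl | hl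
  · simp only [Matrix.add_apply, Matrix.updateCol_self, Pi.add_apply, Matrix.col_apply]
  · simp only [Matrix.add_apply, Matrix.updateCol_ne hl, Matrix.zero_apply, add_zero]

theorem gradDv_of_notMem_range (y : Fin m → (Fin n ⊕ Fin m → L K)) {v : ℕ} (hv : v ≤ m)
    (A : Mat K m n) {i : Fin m} (hi : i ∉ Set.range (Fin.castLE hv)) (j : Fin n) :
    gradDv y v hv A (i, j) = 0 := by
  simp only [gradDv, Dv_eq_det_submatrix_pairing, pairing_add_single,
    updateCol_submatrix_of_notMem_range _ _ _ hi, sub_self]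

theorem gradDv_castLE (y : Fin m → (Fin n ⊕ Fin m → L K)) {v : ℕ} (hv : v ≤ m) (A : Mat K m n)
    (k : Fin v) (j : Fin n) :
    gradDv y v hv A (Fin.castLE hv k, j) =
      (((pairing y A).submatrix (Fin.castLE hv) (Fin.castLE hv)).updateCol k
        ((Matrix.of y).toCols₁.col j ∘ Fin.castLE hv)).det := by
  have updateCol_self : ((pairing y A).submatrix (Fin.castLE hv) (Fin.castLE hv)).updateCol k
      ((pairing y A).col (Fin.castLE hv k) ∘ Fin.castLE hv) =
        (pairing y A).submatrix (Fin.castLE hv) (Fin.castLE hv) :=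
    Matrix.updateCol_eq_self _ k
  simp only [gradDv, Dv_eq_det_submatrix_pairing, pairing_add_single]
  rw [updateCol_submatrix_of_injective _ _ _ (Fin.castLE_injective hv), Pi.add_comp,
    Matrix.det_updateCol_add, updateCol_self, add_sub_cancel_left]

/-- The increasing tuple obtained from `1 < ⋯ < w + 1` by skipping the entry with index `k`
(indices start at `0`); it selects the minors in Laplace expansions of `D_{w+1}`. -/
def IncTuple.skip {w : ℕ} (hw : w + 1 ≤ m) (k : Fin (w + 1)) : IncTuple w m :=
  ⟨Fin.castLE hw ∘ k.succAbove, (Fin.strictMono_castLE hw).comp (Fin.strictMono_succAbove k)⟩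

theorem MvVec_skip (y : Fin m → (Fin n ⊕ Fin m → L K)) {w : ℕ} (hw : w + 1 ≤ m) (A : Mat K m n)
    (h k : Fin (w + 1)) :
    MvVec y w A (.skip hw h, .skip hw k) =
      (((pairing y A).submatrix (Fin.castLE hw) (Fin.castLE hw)).submatrix
        h.succAbove k.succAbove).det :=
  rfl

instance (v m : ℕ) : Finite (IncTuple v m) :=
  inferInstanceAs (Finite {f : Fin v → Fin m // StrictMono f})

end Gradient

theorem lnorm_gradDv_sub_le {m n w : ℕ} (y : Fin m → (Fin n ⊕ Fin m → L 𝔽)) (hw : w + 1 ≤ m)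
    (A' A'' : Mat 𝔽 m n) (i : Fin m) (j : Fin n) :
    lnorm (gradDv y (w + 1) hw A' (i, j) - gradDv y (w + 1) hw A'' (i, j)) ≤
      mnorm (Matrix.of y).toCols₁ * vnorm (fun p => MvVec y w A' p - MvVec y w A'' p) := by
  by_cases hi : i ∈ Set.range (Fin.castLE hw)
  · obtain ⟨k, rfl⟩ := hi
    rw [gradDv_castLE, gradDv_castLE]
    refine abv_det_updateCol_sub_le (f := lnormAbv) isNonarchimedean_lnorm _ _ k _ (fun h => ?_)
      (fun h => ?_)
    · exact lnorm_le_vnorm (fun p : Fin m × Fin n => (Matrix.of y).toCols₁ p.1 p.2)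
        (Fin.castLE hw h, j)
    · rw [← MvVec_skip, ← MvVec_skip]
      exact lnorm_le_vnorm (fun p => MvVec y w A' p - MvVec y w A'' p) (.skip hw h, .skip hw k)
  · rw [gradDv_of_notMem_range y hw A' hi, gradDv_of_notMem_range y hw A'' hi, sub_self, lnorm_zero]
    exact mul_nonneg (vnorm_nonneg _) (vnorm_nonneg _)

theorem gradDv_lipschitz_general {m n : ℕ} (y : Fin m → (Fin n ⊕ Fin m → L 𝔽)) (v : ℕ)
    (hv₁ : 1 ≤ v) (hv : v ≤ m) (A' A'' : Mat 𝔽 m n) :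
    vnorm (fun p => gradDv y v hv A' p - gradDv y v hv A'' p) ≤
      mnorm (Matrix.of y).toCols₁ *
        vnorm (fun p => MvVec y (v - 1) A' p - MvVec y (v - 1) A'' p) := by
  obtain ⟨w, rfl⟩ := Nat.exists_eq_add_of_le' hv₁
  exact Real.iSup_le (fun p => lnorm_gradDv_sub_le y hv A' A'' p.1 p.2)
    (mul_nonneg (vnorm_nonneg _) (vnorm_nonneg _))

/-- **Theorem (Statement 9).** (Corollary `finite2`.)  There is a constant `K₄ > 0`
depending only on `m` and `n` such that
`‖∇D_v(A') - ∇D_v(A'')‖_∞ ≤ K₄ ‖M_{v-1}(A') - M_{v-1}(A'')‖_∞`. -/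
theorem gradDv_lipschitz (𝔽 : Type) [Field 𝔽] [Fintype 𝔽] (m n : ℕ)
    (hm : 0 < m) (hn : 0 < n) :
    ∃ K₄ : ℝ, 0 < K₄ ∧
      ∀ (y : Fin m → (Fin n ⊕ Fin m → L 𝔽)), OrthoSystem y →
        ∀ (v : ℕ) (_ : 1 ≤ v) (hv : v ≤ m) (A' A'' : Mat 𝔽 m n),
          vnorm (fun p => gradDv y v hv A' p - gradDv y v hv A'' p) ≤
            K₄ * vnorm (fun p => MvVec y (v - 1) A' p - MvVec y (v - 1) A'' p) :=
  ⟨1, one_pos, fun y hy v hv₁ hv A' A'' => (gradDv_lipschitz_general y v hv₁ hv A' A'').trans <|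
    mul_le_mul_of_nonneg_right (Real.iSup_le (fun _ => hy.lnorm_le_one _ _) zero_le_one)
      (vnorm_nonneg _)⟩

end FSBad
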